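/- For the 3-dimensional complex Heisenberg Leibniz algebra l_3^{J_a} with a ≠ 0 (basis e, f, z; [e,f] = (1+a)z, [f,e] = (−1+a)z), the Lie algebra of derivations has dimension 4: a linear map d is a derivation if and only if d(e) = αe + μz, d(f) = βf + νz, d(z) = (α+β)z for some scalars α, β, μ, ν. -/

import Mathlib

/-- Underlying space of the Heisenberg Leibniz algebra `l_3^{J_a}`,
coordinates in the basis `{e, f, z}`. -/
abbrev L3 := ℂ × ℂ × ℂ

/-- The bracket of `l_3^{J_a}`: `[e,f] = (1+a)z`, `[f,e] = (-1+a)z`. -/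
def br3 (a : ℂ) (x y : L3) : L3 :=
  (0, 0, (1 + a) * x.1 * y.2.1 + (-1 + a) * x.2.1 * y.1)

def e3 : L3 := (1, 0, 0)
def f3 : L3 := (0, 1, 0)
def z3 : L3 := (0, 0, 1)

/-- A vector of `L3` expanded in the basis `{e, f, z}`. -/
lemma L3.eq_basis_sum (x : L3) : x = x.1 • e3 + x.2.1 • f3 + x.2.2 • z3 := by
  simp [e3, f3, z3]

/-- The linear map `e ↦ α e + μ z`, `f ↦ β f + ν z`, `z ↦ (α + β) z`,
depending linearly on `p = (α, β, μ, ν)`. -/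
def derivationOfCoeffs : (Fin 4 → ℂ) →ₗ[ℂ] L3 →ₗ[ℂ] L3 :=
  LinearMap.mk₂ ℂ
    (fun p x => (p 0 * x.1, p 1 * x.2.1, p 2 * x.1 + p 3 * x.2.1 + (p 0 + p 1) * x.2.2))
    (by intros; ext <;> simp <;> ring)
    (by intros; ext <;> simp <;> ring)
    (by intros; ext <;> simp <;> ring)
    (by intros; ext <;> simp <;> ring)

lemma derivationOfCoeffs_apply (p : Fin 4 → ℂ) (x : L3) :
    derivationOfCoeffs p x =
      (p 0 * x.1, p 1 * x.2.1, p 2 * x.1 + p 3 * x.2.1 + (p 0 + p 1) * x.2.2) :=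
  rfl

lemma derivationOfCoeffs_injective : Function.Injective derivationOfCoeffs := by
  intro p q h
  have he := LinearMap.congr_fun h e3
  have hf := LinearMap.congr_fun h f3
  simp only [derivationOfCoeffs_apply, e3, f3, Prod.mk.injEq, mul_one, mul_zero, add_zero,
    zero_add] at he hf
  funext i
  fin_cases i
  exacts [he.1, hf.2.1, he.2.2, hf.2.2]

lemma derivationOfCoeffs_br3 (a : ℂ) (p : Fin 4 → ℂ) (x y : L3) :
    derivationOfCoeffs p (br3 a x y) =
      br3 a (derivationOfCoeffs p x) y + br3 a x (derivationOfCoeffs p y) := by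
  ext <;> simp [derivationOfCoeffs_apply, br3]
  ring

lemma exists_eq_derivationOfCoeffs_iff (d : L3 →ₗ[ℂ] L3) :
    (∃ p, derivationOfCoeffs p = d) ↔
      ∃ α β μ ν : ℂ,
        d e3 = α • e3 + μ • z3 ∧ d f3 = β • f3 + ν • z3 ∧ d z3 = (α + β) • z3 := by
  constructor
  · rintro ⟨p, rfl⟩
    exact ⟨p 0, p 1, p 2, p 3, by simp [derivationOfCoeffs_apply, e3, f3, z3]⟩
  · rintro ⟨α, β, μ, ν, he, hf, hz⟩
    refine ⟨![α, β, μ, ν], LinearMap.ext fun x => ?_⟩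
    conv_rhs => rw [L3.eq_basis_sum x]
    rw [map_add, map_add, map_smul, map_smul, map_smul, he, hf, hz]
    ext <;> simp [derivationOfCoeffs_apply, e3, f3, z3] <;> ring

lemma exists_coeffs_of_derivation {a : ℂ} (ha : a ≠ 0) {d : L3 →ₗ[ℂ] L3}
    (hd : ∀ x y : L3, d (br3 a x y) = br3 a (d x) y + br3 a x (d y)) :
    ∃ α β μ ν : ℂ,
      d e3 = α • e3 + μ • z3 ∧ d f3 = β • f3 + ν • z3 ∧ d z3 = (α + β) • z3 := by
  have bee : br3 a e3 e3 = 0 := by simp [br3, e3]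
  have bff : br3 a f3 f3 = 0 := by simp [br3, f3]
  have bef : br3 a e3 f3 = (1 + a) • z3 := by simp [br3, e3, f3, z3]
  have bfe : br3 a f3 e3 = (-1 + a) • z3 := by simp [br3, e3, f3, z3]
  have hee := hd e3 e3
  have hff := hd f3 f3
  have hef := hd e3 f3
  have hfe := hd f3 e3
  rw [bee, map_zero] at hee
  rw [bff, map_zero] at hff
  rw [bef, map_smul] at hef
  rw [bfe, map_smul] at hfe
  have he : (d e3).2.1 = 0 := by
    have h := congrArg (fun v : L3 => v.2.2) hee
    simp [br3, e3] at h
    refine (mul_eq_zero.mp (?_ : a * _ = 0)).resolve_left ha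
    simp only [e3]
    linear_combination -h / 2
  have hf : (d f3).1 = 0 := by
    have h := congrArg (fun v : L3 => v.2.2) hff
    simp [br3, f3] at h
    refine (mul_eq_zero.mp (?_ : a * _ = 0)).resolve_left ha
    simp only [f3]
    linear_combination -h / 2
  have hz : d z3 = ((d e3).1 + (d f3).2.1) • z3 := by
    have h : d z3 = (1 / 2 : ℂ) • ((1 + a) • d z3 - (-1 + a) • d z3) := by module
    rw [h, hef, hfe]
    ext <;> simp [br3, e3, f3, z3]
    ring
  refine ⟨(d e3).1, (d f3).2.1, (d e3).2.2, (d f3).2.2, ?_, ?_, hz⟩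
  · conv_lhs => rw [L3.eq_basis_sum (d e3), he, zero_smul, add_zero]
  · conv_lhs => rw [L3.eq_basis_sum (d f3), hf, zero_smul, zero_add]

/-- For `l_3^{J_a}` with `a ≠ 0`, a linear map `d` is a derivation if and only if
`d(e) = α e + μ z`, `d(f) = β f + ν z`, `d(z) = (α+β) z` for some scalars `α β μ ν`;
hence the Lie algebra of derivations has dimension 4. -/
theorem l3_derivations
    (a : ℂ) (ha : a ≠ 0) :
    (∀ d : L3 →ₗ[ℂ] L3,
      (∀ x y : L3, d (br3 a x y) = br3 a (d x) y + br3 a x (d y)) ↔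
      ∃ α β μ ν : ℂ,
        d e3 = α • e3 + μ • z3 ∧ d f3 = β • f3 + ν • z3 ∧ d z3 = (α + β) • z3) ∧
    Module.finrank ℂ
      (Submodule.span ℂ {d : L3 →ₗ[ℂ] L3 |
        ∀ x y : L3, d (br3 a x y) = br3 a (d x) y + br3 a x (d y)}) = 4 := by
  have key : ∀ d : L3 →ₗ[ℂ] L3,
      (∀ x y : L3, d (br3 a x y) = br3 a (d x) y + br3 a x (d y)) ↔
      ∃ α β μ ν : ℂ,
        d e3 = α • e3 + μ • z3 ∧ d f3 = β • f3 + ν • z3 ∧ d z3 = (α + β) • z3 := by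
    refine fun d => ⟨exists_coeffs_of_derivation ha, fun h => ?_⟩
    obtain ⟨p, rfl⟩ := (exists_eq_derivationOfCoeffs_iff d).mpr h
    exact derivationOfCoeffs_br3 a p
  refine ⟨key, ?_⟩
  have hrange : {d : L3 →ₗ[ℂ] L3 |
      ∀ x y : L3, d (br3 a x y) = br3 a (d x) y + br3 a x (d y)} =
        (LinearMap.range derivationOfCoeffs : Set (L3 →ₗ[ℂ] L3)) :=
    Set.ext fun d => (key d).trans (exists_eq_derivationOfCoeffs_iff d).symm
  rw [hrange, Submodule.span_eq, LinearMap.finrank_range_of_inj derivationOfCoeffs_injective,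
    Module.finrank_fin_fun]
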